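/- Let n ≥ 2 be fixed, c ≥ 1, and let (X_d)_{d≥1} be a unitarily invariant sequence of random positive semidefinite matrices X_d ∈ M_n(ℂ) ⊗ M_d(ℂ) converging strongly to the Marčenko–Pastur distribution MP_c. If √c > (1 + √(n²+n−1)) / (√(n²+n−1) − √(n²−1)), then almost surely, for all sufficiently large d, X_d ∈ SEP_{n,d}; in particular lim_{d→∞} P(X_d ∈ SEP_{n,d}) = 1. -/

import Mathlib

open MeasureTheory Filter Topology Polynomial Matrix Kronecker
open scoped ComplexOrder

noncomputable section

/-- Measurable space structure on matrices (entrywise). -/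
instance matMS (m n : Type*) : MeasurableSpace (Matrix m n ℂ) :=
  inferInstanceAs (MeasurableSpace (m → n → ℂ))

/-- The ℓ²→ℓ² operator norm of a complex square matrix. -/
def opNorm {N : Type*} [Fintype N] [DecidableEq N] (X : Matrix N N ℂ) : ℝ :=
  ‖Matrix.toEuclideanCLM (𝕜 := ℂ) (n := N) X‖

/-- Application of a real polynomial to a complex square matrix. -/
def polyApply {N : Type*} [Fintype N] [DecidableEq N] (P : Polynomial ℝ)
    (X : Matrix N N ℂ) : Matrix N N ℂ :=
  Polynomial.aeval X (P.map (algebraMap ℝ ℂ))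

/-- The (topological) support of a measure on ℝ: points all of whose open
neighbourhoods have positive measure. -/
def msupport (μ : Measure ℝ) : Set ℝ :=
  {x | ∀ U : Set ℝ, IsOpen U → x ∈ U → 0 < μ U}

/-- Strong convergence of a sequence of random matrices `X d ∈ M_n(ℂ) ⊗ M_d(ℂ)`
towards a compactly supported probability measure `μ`: almost surely, for every
real polynomial `P`, the normalized traces of `P(X d)` converge to `∫ P dμ` and the
operator norms of `P(X d)` converge to `sup {|P(x)| : x ∈ supp μ}`. -/
def StrongConv {Ω : Type*} [MeasurableSpace Ω] (ℙ : Measure Ω) (n : ℕ)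
    (X : (d : ℕ) → Ω → Matrix (Fin n × Fin d) (Fin n × Fin d) ℂ)
    (μ : Measure ℝ) : Prop :=
  ∀ᵐ ω ∂ℙ, ∀ P : Polynomial ℝ,
    Tendsto (fun d : ℕ => ((n : ℂ) * (d : ℂ))⁻¹ * (polyApply P (X d ω)).trace) atTop
      (𝓝 ((∫ x, P.eval x ∂μ : ℝ) : ℂ)) ∧
    Tendsto (fun d : ℕ => opNorm (polyApply P (X d ω))) atTop
      (𝓝 (sSup ((fun x => |P.eval x|) '' msupport μ)))

/-- Unitary invariance of a sequence of random matrices: for every `d` and every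
unitary `U`, the random matrix `U (X d) U*` has the same distribution as `X d`. -/
def UnitInv {Ω : Type*} [MeasurableSpace Ω] (ℙ : Measure Ω) (n : ℕ)
    (X : (d : ℕ) → Ω → Matrix (Fin n × Fin d) (Fin n × Fin d) ℂ) : Prop :=
  ∀ d : ℕ, ∀ U : Matrix (Fin n × Fin d) (Fin n × Fin d) ℂ,
    U ∈ unitary (Matrix (Fin n × Fin d) (Fin n × Fin d) ℂ) →
    Measure.map (fun ω => U * X d ω * star U) ℙ = Measure.map (X d) ℙ

/-- The separable cone `SEP_{n,d}`. -/
def SEP (n d : ℕ) : Set (Matrix (Fin n × Fin d) (Fin n × Fin d) ℂ) :=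
  {X | ∃ (k : ℕ) (A : Fin k → Matrix (Fin n) (Fin n) ℂ)
      (B : Fin k → Matrix (Fin d) (Fin d) ℂ),
    (∀ i, (A i).PosSemidef) ∧ (∀ i, (B i).PosSemidef) ∧ X = ∑ i, A i ⊗ₖ B i}

/-- The partial transpose on `M_n(ℂ) ⊗ M_d(ℂ)`: transposition of the first factor. -/
def ptrans {n d : ℕ} (X : Matrix (Fin n × Fin d) (Fin n × Fin d) ℂ) :
    Matrix (Fin n × Fin d) (Fin n × Fin d) ℂ :=
  fun p q => X (q.1, p.2) (p.1, q.2)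

/-- The PPT cone `PPT_{n,d}`: positive semidefinite matrices with positive
semidefinite partial transpose. -/
def PPT (n d : ℕ) : Set (Matrix (Fin n × Fin d) (Fin n × Fin d) ℂ) :=
  {X | X.PosSemidef ∧ (ptrans X).PosSemidef}

/-- The Marčenko–Pastur distribution of parameter `c > 0`:
`max(1−c,0)·δ₀ + (√((b−x)(x−a))/(2πx))·1_{(a,b)}(x) dx`,
with `a = (1−√c)²` and `b = (1+√c)²`. -/
def MP (c : ℝ) : Measure ℝ :=
  ENNReal.ofReal (max (1 - c) 0) • Measure.dirac (0 : ℝ) +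
    MeasureTheory.volume.withDensity (fun x => ENNReal.ofReal
      (Set.indicator (Set.Ioo ((1 - Real.sqrt c) ^ 2) ((1 + Real.sqrt c) ^ 2))
        (fun y => Real.sqrt (((1 + Real.sqrt c) ^ 2 - y) * (y - (1 - Real.sqrt c) ^ 2))
          / (2 * Real.pi * y)) x))

theorem SEP.kronecker_mem {n d : ℕ} {A : Matrix (Fin n) (Fin n) ℂ} {B : Matrix (Fin d) (Fin d) ℂ}
    (hA : A.PosSemidef) (hB : B.PosSemidef) : A ⊗ₖ B ∈ SEP n d :=
  ⟨1, fun _ => A, fun _ => B, fun _ => hA, fun _ => hB, by simp⟩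

theorem SEP.add_mem {n d : ℕ} {X Y : Matrix (Fin n × Fin d) (Fin n × Fin d) ℂ}
    (hX : X ∈ SEP n d) (hY : Y ∈ SEP n d) : X + Y ∈ SEP n d := by
  obtain ⟨k, A, B, hA, hB, rfl⟩ := hX
  obtain ⟨l, A', B', hA', hB', rfl⟩ := hY
  refine ⟨k + l, Fin.append A A', Fin.append B B', fun i => ?_, fun i => ?_, ?_⟩
  · induction i using Fin.addCases <;> simp [hA, hA']
  · induction i using Fin.addCases <;> simp [hB, hB']
  · simp [Fin.sum_univ_add]

theorem SEP.zero_mem (n d : ℕ) : (0 : Matrix (Fin n × Fin d) (Fin n × Fin d) ℂ) ∈ SEP n d :=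
  ⟨0, Fin.elim0, Fin.elim0, fun i => i.elim0, fun i => i.elim0, by simp⟩

theorem SEP.sum_mem {n d : ℕ} {ι : Type*} (s : Finset ι)
    {X : ι → Matrix (Fin n × Fin d) (Fin n × Fin d) ℂ} (hX : ∀ i ∈ s, X i ∈ SEP n d) :
    ∑ i ∈ s, X i ∈ SEP n d :=
  Finset.sum_induction X (· ∈ SEP n d) (fun _ _ => SEP.add_mem) (SEP.zero_mem n d) hX

theorem SEP.smul_mem {n d : ℕ} {X : Matrix (Fin n × Fin d) (Fin n × Fin d) ℂ}
    (hX : X ∈ SEP n d) {r : ℝ} (hr : 0 ≤ r) : (r : ℂ) • X ∈ SEP n d := by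
  obtain ⟨k, A, B, hA, hB, rfl⟩ := hX
  refine ⟨k, fun i => (r : ℂ) • A i, B, fun i => (hA i).smul (by exact_mod_cast hr), hB, ?_⟩
  simp [Finset.smul_sum, Matrix.smul_kronecker]

/-- The unnormalised Fejér kernel of a matrix:
`∑_{|m| < N} (N - |m|) B^(m)`, where `B^(m) = B ^ m` and `B^(-m) = (Bᴴ) ^ m` for `m ≥ 0`. -/
def fejer {ι : Type*} [Fintype ι] [DecidableEq ι] (N : ℕ) (B : Matrix ι ι ℂ) : Matrix ι ι ℂ :=
  ∑ j ∈ Finset.range N,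
    (∑ i ∈ Finset.range (j + 1), B ^ i + (∑ i ∈ Finset.range (j + 1), B ^ i)ᴴ - 1)

theorem fejer_succ_eq {ι : Type*} [Fintype ι] [DecidableEq ι] (N : ℕ) (B : Matrix ι ι ℂ) :
    fejer (N + 1) B =
      (∑ i ∈ Finset.range (N + 1), B ^ i)ᴴ * (∑ i ∈ Finset.range (N + 1), B ^ i) +
        ∑ j ∈ Finset.range N, (∑ i ∈ Finset.range (j + 1), B ^ i)ᴴ * (1 - Bᴴ * B) *
          (∑ i ∈ Finset.range (j + 1), B ^ i) := by
  induction N with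
  | zero => simp [fejer]
  | succ N ih =>
    have h : ∑ i ∈ Finset.range (N + 1 + 1), B ^ i
        = B * ∑ i ∈ Finset.range (N + 1), B ^ i + 1 := by
      rw [Finset.sum_range_succ', Finset.mul_sum]
      simp [pow_succ']
    rw [fejer, Finset.sum_range_succ, ← fejer, ih, h,
      Finset.sum_range_succ (fun j => (∑ i ∈ Finset.range (j + 1), B ^ i)ᴴ * (1 - Bᴴ * B) *
        (∑ i ∈ Finset.range (j + 1), B ^ i)) N]
    generalize ∑ i ∈ Finset.range (N + 1), B ^ i = T
    generalize ∑ j ∈ Finset.range N, (∑ i ∈ Finset.range (j + 1), B ^ i)ᴴ * (1 - Bᴴ * B) *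
      (∑ i ∈ Finset.range (j + 1), B ^ i) = S
    simp only [conjTranspose_add, conjTranspose_mul, conjTranspose_one]
    noncomm_ring

/-- The Fejér kernel of a contraction is positive semidefinite. -/
theorem fejer_posSemidef {ι : Type*} [Fintype ι] [DecidableEq ι] (N : ℕ) {B : Matrix ι ι ℂ}
    (hB : (1 - Bᴴ * B).PosSemidef) : (fejer N B).PosSemidef := by
  cases N with
  | zero => simpa [fejer] using Matrix.PosSemidef.zero
  | succ N =>
    rw [fejer_succ_eq]
    exact (posSemidef_conjTranspose_mul_self _).add
      (posSemidef_sum _ fun j _ => hB.conjTranspose_mul_mul_same _)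

theorem sum_range_pow_of_pow_eq_one {M : ℕ} {w : ℂ} (hw : w ^ M = 1) :
    ∑ k ∈ Finset.range M, w ^ k = if w = 1 then (M : ℂ) else 0 := by
  split_ifs with h
  · simp [h]
  · rw [geom_sum_eq h, hw, sub_self, zero_div]

section RootsOfUnity

variable {ι : Type*} [Fintype ι] [DecidableEq ι] {N : ℕ} {ζ : ℂ}

theorem fejer_smul (N : ℕ) (z : ℂ) (B : Matrix ι ι ℂ) :
    fejer N (star z • B) = ∑ j ∈ Finset.range N,
      (∑ i ∈ Finset.range (j + 1), (star z ^ i) • B ^ i +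
        ∑ i ∈ Finset.range (j + 1), (z ^ i) • Bᴴ ^ i - 1) := by
  simp [fejer, _root_.smul_pow, conjTranspose_sum, conjTranspose_smul, conjTranspose_pow]

theorem star_mul_self_of_pow_eq_one {M : ℕ} (hM : M ≠ 0) (hζ : ζ ^ M = 1) :
    ζ * star ζ = 1 := by
  have := Complex.norm_eq_one_of_pow_eq_one hζ hM
  simp [Complex.mul_conj, Complex.normSq_eq_norm_sq, this]

theorem sum_pow_mul_star_pow (hζ : IsPrimitiveRoot ζ (2 * N)) (hN : 0 < N) (a i : ℕ)
    (ha : a < 2 * N) (hi : i < 2 * N) :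
    ∑ k ∈ Finset.range (2 * N), (ζ ^ k) ^ a * star (ζ ^ k) ^ i
      = if a = i then ((2 * N : ℕ) : ℂ) else 0 := by
  have hu := star_mul_self_of_pow_eq_one (by omega) hζ.pow_eq_one
  have h1 : (ζ ^ a * star ζ ^ i) ^ (2 * N) = 1 := by
    rw [mul_pow, ← pow_mul, ← pow_mul, mul_comm a, mul_comm i, pow_mul ζ (2 * N) a,
      pow_mul (star ζ) (2 * N) i, ← star_pow, hζ.pow_eq_one]
    simp
  have h2 : ζ ^ a * star ζ ^ i = 1 ↔ a = i := by
    constructor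
    · intro h
      refine hζ.pow_inj ha hi ?_
      calc ζ ^ a = ζ ^ a * (ζ * star ζ) ^ i := by rw [hu]; simp
        _ = (ζ ^ a * star ζ ^ i) * ζ ^ i := by rw [mul_pow]; ring
        _ = ζ ^ i := by rw [h, one_mul]
    · rintro rfl
      rw [← mul_pow, hu, one_pow]
  rw [← if_congr h2 rfl rfl, ← sum_range_pow_of_pow_eq_one h1]
  refine Finset.sum_congr rfl fun k _ => ?_
  rw [star_pow]
  ring

theorem sum_pow_smul_fejer (hζ : IsPrimitiveRoot ζ (2 * N)) (hN : 0 < N) (B : Matrix ι ι ℂ)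
    {a : ℕ} (ha : a ≤ 1) :
    ∑ k ∈ Finset.range (2 * N), ((ζ ^ k) ^ a) • fejer N (star (ζ ^ k) • B)
      = ((2 * N : ℕ) * (N - a) : ℂ) • B ^ a := by
  have key : ∀ j ∈ Finset.range N, ∑ k ∈ Finset.range (2 * N), ((ζ ^ k) ^ a) •
      (∑ i ∈ Finset.range (j + 1), (star (ζ ^ k) ^ i) • B ^ i +
        ∑ i ∈ Finset.range (j + 1), ((ζ ^ k) ^ i) • Bᴴ ^ i - 1)
      = if a ≤ j then ((2 * N : ℕ) : ℂ) • B ^ a else 0 := by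
    intro j hj
    rw [Finset.mem_range] at hj
    have e1 : ∑ k ∈ Finset.range (2 * N), ∑ i ∈ Finset.range (j + 1),
        ((ζ ^ k) ^ a * star (ζ ^ k) ^ i) • B ^ i
        = if a ≤ j then ((2 * N : ℕ) : ℂ) • B ^ a else 0 := by
      rw [Finset.sum_comm]
      simp_rw [← Finset.sum_smul]
      rw [Finset.sum_congr rfl fun i hi => by
        rw [sum_pow_mul_star_pow hζ hN a i (by omega) (by rw [Finset.mem_range] at hi; omega)]]
      simp [ite_smul]
    have e0 : ∑ k ∈ Finset.range (2 * N), (ζ ^ k) ^ a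
        = if a = 0 then ((2 * N : ℕ) : ℂ) else 0 := by
      have := sum_pow_mul_star_pow hζ hN a 0 (by omega) (by omega)
      simpa using this
    have e2 : ∑ k ∈ Finset.range (2 * N), ∑ i ∈ Finset.range (j + 1),
        ((ζ ^ k) ^ a * (ζ ^ k) ^ i) • Bᴴ ^ i
        = ∑ k ∈ Finset.range (2 * N), ((ζ ^ k) ^ a) • (1 : Matrix ι ι ℂ) := by
      rw [Finset.sum_comm]
      simp_rw [← Finset.sum_smul, ← pow_add]
      rw [e0, Finset.sum_range_succ', Finset.sum_eq_zero, add_zero, e0, pow_zero, zero_add]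
      intro i hi
      rw [Finset.mem_range] at hi
      have := sum_pow_mul_star_pow hζ hN (a + (i + 1)) 0 (by omega) (by omega)
      simp only [pow_zero, mul_one] at this
      rw [this, if_neg (by omega), zero_smul]
    simp_rw [smul_sub, smul_add, Finset.smul_sum, smul_smul]
    rw [Finset.sum_sub_distrib, Finset.sum_add_distrib, e1, e2, add_sub_cancel_right]
  simp_rw [fejer_smul, Finset.smul_sum]
  rw [Finset.sum_comm, Finset.sum_congr rfl key, ← Finset.sum_filter, Finset.sum_const]
  have hcard : (Finset.filter (fun j => a ≤ j) (Finset.range N)).card = N - a := by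
    rw [Finset.range_eq_Ico, Finset.Ico_filter_le]
    simp
  rw [hcard, ← Nat.cast_smul_eq_nsmul ℂ, smul_smul, Nat.cast_sub (by omega), mul_comm]

end RootsOfUnity

theorem posSemidef_single_add {n : ℕ} (i j : Fin n) {z : ℂ} (hz : z * star z = 1) :
    (single i i 1 + z • single i j 1 + star z • single j i 1 + single j j 1 :
      Matrix (Fin n) (Fin n) ℂ).PosSemidef := by
  have := posSemidef_vecMulVec_self_star (z • Pi.single i 1 + Pi.single j 1 : Fin n → ℂ)
  convert this using 1
  have hs : ∀ l : Fin n, star (Pi.single l 1 : Fin n → ℂ) = Pi.single l 1 := fun l => by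
    rw [← Pi.single_star, star_one]
  simp only [star_add, star_smul, hs, add_vecMulVec, vecMulVec_add, smul_vecMulVec,
    vecMulVec_smul, ← single_eq_single_vecMulVec_single, smul_smul, mul_comm (star z) z, hz, one_smul, smul_add]
  abel

/-- The two-block matrix with off-diagonal block a slightly shrunk contraction is separable. -/
theorem SEP.pair_mem {n d N : ℕ} (hN : 0 < N) (i j : Fin n) {B : Matrix (Fin d) (Fin d) ℂ}
    (hB : (1 - Bᴴ * B).PosSemidef) :
    (N : ℂ) • ((single i i 1 + single j j 1 : Matrix (Fin n) (Fin n) ℂ) ⊗ₖ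
        (1 : Matrix (Fin d) (Fin d) ℂ)) +
      (N - 1 : ℂ) • ((single i j 1 : Matrix (Fin n) (Fin n) ℂ) ⊗ₖ B +
        (single j i 1 : Matrix (Fin n) (Fin n) ℂ) ⊗ₖ Bᴴ) ∈ SEP n d := by
  obtain ⟨ζ, hζ⟩ : ∃ ζ : ℂ, IsPrimitiveRoot ζ (2 * N) :=
    ⟨_, Complex.isPrimitiveRoot_exp (2 * N) (by omega)⟩
  have hz : ∀ k, ζ ^ k * star (ζ ^ k) = 1 := fun k => by
    rw [star_pow, ← mul_pow, star_mul_self_of_pow_eq_one (by omega) hζ.pow_eq_one, one_pow]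
  have hQ : ∀ k, (fejer N (star (ζ ^ k) • B)).PosSemidef := fun k => by
    refine fejer_posSemidef N ?_
    rwa [conjTranspose_smul, star_star, smul_mul_smul_comm, hz, one_smul]
  have h0 := sum_pow_smul_fejer hζ hN B (Nat.zero_le 1)
  have h1 := sum_pow_smul_fejer hζ hN B le_rfl
  have h2 := congrArg conjTranspose h1
  simp only [pow_zero, one_smul, pow_one, Nat.cast_zero, sub_zero, Nat.cast_one] at h0 h1 h2
  simp only [conjTranspose_sum, conjTranspose_smul, (hQ _).isHermitian.eq] at h2
  have hmem := SEP.smul_mem (SEP.sum_mem (Finset.range (2 * N)) fun k _ =>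
    SEP.kronecker_mem (posSemidef_single_add i j (hz k)) (hQ k))
    (r := ((2 * N : ℕ) : ℝ)⁻¹) (by positivity)
  convert hmem using 1
  have hN' : ((2 * N : ℕ) : ℂ) ≠ 0 := by
    rw [Nat.cast_ne_zero]; omega
  simp only [add_kronecker, smul_kronecker, ← kronecker_smul, Finset.sum_add_distrib]
  have hk : ∀ (A : Matrix (Fin n) (Fin n) ℂ) (f : ℕ → Matrix (Fin d) (Fin d) ℂ),
      ∑ k ∈ Finset.range (2 * N), A ⊗ₖ f k = A ⊗ₖ ∑ k ∈ Finset.range (2 * N), f k := fun A f =>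
    (map_sum (kroneckerBilinear (R := ℂ) A) f _).symm
  rw [hk, hk, hk, hk, h0, h1, h2]
  simp only [kronecker_smul, smul_add, smul_smul, star_mul', star_sub, star_natCast, star_one,
    Complex.ofReal_inv, Complex.ofReal_natCast]
  simp only [← mul_assoc, inv_mul_cancel₀ hN', one_mul]
  abel

/-- The `(i, j)` block of a matrix in `M_n(ℂ) ⊗ M_d(ℂ)`. -/
def blockOf {n d : ℕ} (X : Matrix (Fin n × Fin d) (Fin n × Fin d) ℂ) (i j : Fin n) :
    Matrix (Fin d) (Fin d) ℂ :=
  X.submatrix (Prod.mk i) (Prod.mk j)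

theorem sum_single_kronecker_blockOf {n d : ℕ}
    (X : Matrix (Fin n × Fin d) (Fin n × Fin d) ℂ) :
    ∑ i, ∑ j, (single i j 1 : Matrix (Fin n) (Fin n) ℂ) ⊗ₖ blockOf X i j = X := by
  ext ⟨a, b⟩ ⟨a', b'⟩
  simp [Matrix.sum_apply, blockOf, single_apply, ite_and]

/-- A block of an operator of norm at most `δ` has norm at most `δ`. -/
theorem blockOf_contraction {n d : ℕ} {X : Matrix (Fin n × Fin d) (Fin n × Fin d) ℂ} {δ : ℝ}
    (hX : ((δ ^ 2 : ℂ) • 1 - Xᴴ * X).PosSemidef) (i j : Fin n) :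
    ((δ ^ 2 : ℂ) • 1 - (blockOf X i j)ᴴ * blockOf X i j).PosSemidef := by
  have h1 := hX.submatrix (Prod.mk j : Fin d → Fin n × Fin d)
  have h2 : (∑ k ∈ Finset.univ.erase i, (blockOf X k j)ᴴ * blockOf X k j).PosSemidef :=
    posSemidef_sum _ fun k _ => posSemidef_conjTranspose_mul_self _
  convert h1.add h2 using 1
  have h3 : (Xᴴ * X).submatrix (Prod.mk j) (Prod.mk j)
      = ∑ k, (blockOf X k j)ᴴ * blockOf X k j := by
    ext a b
    simp [Matrix.mul_apply, Matrix.sum_apply, blockOf, Fintype.sum_prod_type]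
  have h4 : ((δ ^ 2 : ℂ) • (1 : Matrix (Fin n × Fin d) (Fin n × Fin d) ℂ)).submatrix
      (Prod.mk j) (Prod.mk j) = (δ ^ 2 : ℂ) • (1 : Matrix (Fin d) (Fin d) ℂ) := by
    ext a b
    simp [Matrix.one_apply]
  rw [submatrix_sub, Pi.sub_apply, Pi.sub_apply, h3, h4,
    ← Finset.add_sum_erase _ _ (Finset.mem_univ i)]
  abel

open scoped Matrix.Norms.L2Operator MatrixOrder in
theorem posSemidef_of_opNorm_le {N : Type*} [Fintype N] [DecidableEq N] {X : Matrix N N ℂ}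
    {δ : ℝ} (hX : opNorm X ≤ δ) : ((δ ^ 2 : ℂ) • 1 - Xᴴ * X).PosSemidef := by
  have hn : ‖X‖ ≤ δ := hX
  have h : star X * X ≤ algebraMap ℝ (Matrix N N ℂ) (‖X‖ ^ 2) :=
    CStarAlgebra.star_mul_le_algebraMap_norm_sq
  have h' : algebraMap ℝ (Matrix N N ℂ) (‖X‖ ^ 2) ≤ algebraMap ℝ (Matrix N N ℂ) (δ ^ 2) :=
    algebraMap_mono _ (by gcongr)
  have := Matrix.le_iff.1 (h.trans h')
  have e : algebraMap ℝ (Matrix N N ℂ) (δ ^ 2) = (δ ^ 2 : ℂ) • 1 := by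
    rw [Algebra.algebraMap_eq_smul_one, ← Complex.coe_smul]
    push_cast
    rfl
  rwa [e] at this

/-- A self-adjoint matrix in `M_n(ℂ) ⊗ M_d(ℂ)` at distance at most `δ < α / n` from `α • 1`
is separable. -/
theorem SEP.mem_of_opNorm_le {n d : ℕ} {X : Matrix (Fin n × Fin d) (Fin n × Fin d) ℂ}
    (hX : X.IsHermitian) {α δ : ℝ} (hδ : 0 < δ) (hα : n * δ < α)
    (hXα : opNorm (X - (α : ℂ) • 1) ≤ δ) : X ∈ SEP n d := by
  obtain ⟨N, hN2, hN⟩ : ∃ N : ℕ, 2 ≤ N ∧ n * δ * N ≤ α * (N - 1) := by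
    obtain ⟨M, hM⟩ := exists_nat_gt (α / (α - n * δ))
    refine ⟨M + 2, by omega, ?_⟩
    rw [div_lt_iff₀ (by linarith)] at hM
    push_cast
    nlinarith
  set Δ := X - (α : ℂ) • 1 with hΔ
  have hΔH : Δᴴ = Δ := by
    rw [hΔ, conjTranspose_sub, hX.eq, conjTranspose_smul, conjTranspose_one]
    simp
  have hblockH : ∀ i j, (blockOf Δ i j)ᴴ = blockOf Δ j i := fun i j => by
    rw [blockOf, conjTranspose_submatrix, hΔH, blockOf]
  have hN1 : (0 : ℝ) < N - 1 := by
    have : (2 : ℝ) ≤ N := by exact_mod_cast hN2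
    linarith
  have hδC : (δ : ℂ) ≠ 0 := by exact_mod_cast hδ.ne'
  have hN1C : (N - 1 : ℂ) ≠ 0 := by exact_mod_cast hN1.ne'
  have hB : ∀ i j, (1 - (((δ : ℂ)⁻¹) • blockOf Δ i j)ᴴ *
      (((δ : ℂ)⁻¹) • blockOf Δ i j)).PosSemidef := fun i j => by
    have := (blockOf_contraction (posSemidef_of_opNorm_le hXα) i j).smul
      (a := ((δ ^ 2)⁻¹ : ℝ)) (by positivity)
    convert this using 1
    rw [smul_sub, ← Complex.coe_smul, ← Complex.coe_smul, smul_smul, conjTranspose_smul,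
      smul_mul_smul_comm]
    have e1 : (((δ ^ 2)⁻¹ : ℝ) : ℂ) * (δ : ℂ) ^ 2 = 1 := by
      push_cast; field_simp
    have e2 : star ((δ : ℂ)⁻¹) * (δ : ℂ)⁻¹ = (((δ ^ 2)⁻¹ : ℝ) : ℂ) := by
      simp; ring
    rw [e1, e2, one_smul]
  have h1 : ((α - n * (δ * N / (N - 1)) : ℝ) : ℂ) •
      ((1 : Matrix (Fin n) (Fin n) ℂ) ⊗ₖ (1 : Matrix (Fin d) (Fin d) ℂ)) ∈ SEP n d := by
    refine SEP.smul_mem (SEP.kronecker_mem PosSemidef.one PosSemidef.one) ?_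
    rw [sub_nonneg, ← mul_div_assoc, div_le_iff₀ hN1]
    linarith
  have h2 := SEP.smul_mem (SEP.sum_mem Finset.univ fun i _ => SEP.sum_mem Finset.univ fun j _ =>
    SEP.pair_mem (N := N) (by omega) i j (hB i j)) (r := δ / (N - 1) / 2) (by positivity)
  convert SEP.add_mem h1 h2 using 1
  have hsum1 : ∑ i, (single i i 1 : Matrix (Fin n) (Fin n) ℂ) ⊗ₖ (1 : Matrix (Fin d) (Fin d) ℂ)
      = 1 := by
    ext ⟨a, b⟩ ⟨a', b'⟩
    simp [Matrix.sum_apply, single_apply, Matrix.one_apply, ite_and]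
    split_ifs <;> rfl
  have hsum2 := sum_single_kronecker_blockOf Δ
  have hsum3 := hsum2
  rw [Finset.sum_comm] at hsum3
  have hstar : star ((δ : ℂ)⁻¹) = (δ : ℂ)⁻¹ := by simp
  simp only [conjTranspose_smul, hstar, hblockH, add_kronecker, kronecker_smul, smul_add,
    Finset.sum_add_distrib, ← Finset.smul_sum, hsum1, hsum2, hsum3, Finset.sum_const,
    Finset.card_univ, Fintype.card_fin, one_kronecker_one]
  rw [← Nat.cast_smul_eq_nsmul ℂ, show X = (α : ℂ) • 1 + Δ by rw [hΔ]; abel]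
  simp only [smul_smul]
  push_cast
  match_scalars <;> field_simp <;> ring

theorem msupport_MP_subset {c : ℝ} (hc : 1 ≤ c) :
    msupport (MP c) ⊆ Set.Icc ((1 - Real.sqrt c) ^ 2) ((1 + Real.sqrt c) ^ 2) := by
  intro x hx
  by_contra hxI
  refine (hx _ isClosed_Icc.isOpen_compl hxI).ne' ?_
  have h0 : max (1 - c) 0 = 0 := max_eq_right (by linarith)
  rw [MP, h0, ENNReal.ofReal_zero, zero_smul, zero_add,
    withDensity_apply _ isClosed_Icc.measurableSet.compl,
    setLIntegral_congr_fun isClosed_Icc.measurableSet.compl (g := fun _ => 0), lintegral_zero]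
  intro y hy
  have : y ∉ Set.Ioo ((1 - Real.sqrt c) ^ 2) ((1 + Real.sqrt c) ^ 2) :=
    fun h => hy (Set.Ioo_subset_Icc_self h)
  simp [Set.indicator_of_notMem this]

theorem sSup_abs_sub_msupport_MP_le {c : ℝ} (hc : 1 ≤ c) :
    sSup ((fun x => |(Polynomial.X - Polynomial.C (c + 1) : ℝ[X]).eval x|) '' msupport (MP c))
      ≤ 2 * Real.sqrt c := by
  refine Real.sSup_le ?_ (by positivity)
  rintro _ ⟨x, hx, rfl⟩
  have h := msupport_MP_subset hc hx
  have hs := Real.sq_sqrt (zero_le_one.trans hc)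
  simp only [eval_sub, eval_X, eval_C]
  rw [abs_le]
  constructor <;> nlinarith [h.1, h.2]

theorem two_mul_mul_sqrt_lt {n : ℕ} (hn : 2 ≤ n) {c : ℝ} (hc : 1 ≤ c)
    (hcond : Real.sqrt c > (1 + Real.sqrt ((n : ℝ) ^ 2 + n - 1))
        / (Real.sqrt ((n : ℝ) ^ 2 + n - 1) - Real.sqrt ((n : ℝ) ^ 2 - 1))) :
    n * (2 * Real.sqrt c) < c + 1 := by
  have hn' : (2 : ℝ) ≤ n := by exact_mod_cast hn
  have hsq := Real.sq_sqrt (zero_le_one.trans hc)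
  set r := Real.sqrt c
  set s := Real.sqrt ((n : ℝ) ^ 2 + n - 1)
  set t := Real.sqrt ((n : ℝ) ^ 2 - 1)
  have hs2 : s ^ 2 = (n : ℝ) ^ 2 + n - 1 := Real.sq_sqrt (by nlinarith)
  have ht2 : t ^ 2 = (n : ℝ) ^ 2 - 1 := Real.sq_sqrt (by nlinarith)
  have hs : (n : ℝ) ≤ s := Real.le_sqrt_of_sq_le (by linarith)
  have ht : (n : ℝ) - 1 ≤ t := Real.le_sqrt_of_sq_le (by nlinarith)
  have hst : 0 < s - t := by
    by_contra h
    nlinarith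
  rw [gt_iff_lt, div_lt_iff₀ hst] at hcond
  have h1 : (1 + s) * (s + t) < r * n := by
    have := mul_lt_mul_of_pos_right hcond (show 0 < s + t by linarith)
    nlinarith
  have h2 : (1 + (n : ℝ)) * (2 * n - 1) ≤ (1 + s) * (s + t) :=
    mul_le_mul (by linarith) (by linarith) (by linarith) (by linarith)
  have h3 : 2 * (n : ℝ) < r := by
    by_contra h
    nlinarith
  nlinarith

theorem tendsto_measure_one_of_ae_eventually {Ω : Type*} [MeasurableSpace Ω] {ℙ : Measure Ω}
    [IsProbabilityMeasure ℙ] {p : ℕ → Ω → Prop} (h : ∀ᵐ ω ∂ℙ, ∀ᶠ d in atTop, p d ω) :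
    Tendsto (fun d => ℙ {ω | p d ω}) atTop (𝓝 1) := by
  have hmono : Monotone fun D : ℕ => {ω | ∀ d ≥ D, p d ω} :=
    fun D D' hD ω hω d hd => hω d (hD.trans hd)
  have hunion : ℙ (⋃ D : ℕ, {ω | ∀ d ≥ D, p d ω}) = 1 := by
    rw [← measure_univ (μ := ℙ)]
    refine measure_congr (eventuallyEq_univ.2 ?_)
    filter_upwards [h] with ω hω
    simpa [eventually_atTop] using hω
  have ht := tendsto_measure_iUnion_atTop (μ := ℙ) hmono
  rw [hunion] at ht
  exact tendsto_of_tendsto_of_tendsto_of_le_of_le ht tendsto_const_nhds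
    (fun D => measure_mono fun ω hω => hω D le_rfl) fun D => prob_le_one

/-- if `√c > (1+√(n²+n−1))/(√(n²+n−1)−√(n²−1))`, a unitarily invariant
sequence of random PSD matrices converging strongly to `MP_c` (`c ≥ 1`) is
asymptotically separable. -/
theorem stmt8
    {Ω : Type*} [MeasurableSpace Ω] (ℙ : Measure Ω) [IsProbabilityMeasure ℙ]
    (n : ℕ) (hn : 2 ≤ n) (c : ℝ) (hc : 1 ≤ c)
    (X : (d : ℕ) → Ω → Matrix (Fin n × Fin d) (Fin n × Fin d) ℂ)
    (hmeas : ∀ d, Measurable (X d))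
    (hpsd : ∀ d ω, (X d ω).PosSemidef)
    (hUI : UnitInv ℙ n X)
    (hconv : StrongConv ℙ n X (MP c))
    (hcond : Real.sqrt c > (1 + Real.sqrt ((n : ℝ) ^ 2 + n - 1))
        / (Real.sqrt ((n : ℝ) ^ 2 + n - 1) - Real.sqrt ((n : ℝ) ^ 2 - 1))) :
    (∀ᵐ ω ∂ℙ, ∀ᶠ d : ℕ in atTop, X d ω ∈ SEP n d) ∧
      Tendsto (fun d : ℕ => ℙ {ω | X d ω ∈ SEP n d}) atTop (𝓝 1) := by
  have hae : ∀ᵐ ω ∂ℙ, ∀ᶠ d : ℕ in atTop, X d ω ∈ SEP n d := by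
    have hlt := two_mul_mul_sqrt_lt hn hc hcond
    have hn0 : (0 : ℝ) < n := by exact_mod_cast (by omega : 0 < n)
    obtain ⟨δ, hδ1, hδ2⟩ := exists_between ((lt_div_iff₀' hn0).2 hlt)
    filter_upwards [hconv] with ω hω
    have hev := (hω (Polynomial.X - Polynomial.C (c + 1))).2.eventually_lt_const
      ((sSup_abs_sub_msupport_MP_le hc).trans_lt hδ1)
    filter_upwards [hev] with d hd
    refine SEP.mem_of_opNorm_le (hpsd d ω).isHermitian (α := c + 1)
      (lt_of_le_of_lt (by positivity) hδ1) ((lt_div_iff₀' hn0).1 hδ2) (le_of_lt ?_)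
    convert hd using 2
    simp [polyApply, Algebra.algebraMap_eq_smul_one, add_smul, ← Complex.coe_smul]
  exact ⟨hae, tendsto_measure_one_of_ae_eventually hae⟩
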